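/- For every real K > 0 there exists a constant c > 0 such that for every finite field F and every finite nonempty subset P ⊆ F² with T(P) ≤ K · |P|^{3/2}, one has a(P) ≥ c · |P|^{3/4}. -/

import Mathlib

/-!
The proof is the deletion method. Put each point of `P` into a random set `S` independently with
probability `p`. The expectation of `|S|` minus the number of collinear triples inside `S` is
`p |P| - p³ T(P)`, and removing one point of each collinear triple from an outcome `S` that attains
this expectation leaves an arc. If `T(P) ≤ K |P| t²`, the choice `p = 1 / ((1 + K) t)` makes the
expectation at least `|P| / ((1 + K)² t)`; the theorem is the case `t = |P|^{1/4}`.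
-/

open Finset MeasureTheory
open scoped NNReal ENNReal

/-- A set `P` in the affine plane over `F` is an arc if it contains no three
distinct collinear points. -/
def IsArc (F : Type*) [Field F] (P : Set (F × F)) : Prop :=
  ∀ a ∈ P, ∀ b ∈ P, ∀ c ∈ P,
    a ≠ b → a ≠ c → b ≠ c → ¬ Collinear F ({a, b, c} : Set (F × F))

/-- `numArcs F k` is the number of `k`-element arcs in `F²`. -/
noncomputable def numArcs (F : Type*) [Field F] [Fintype F] (k : ℕ) : ℕ :=
  Nat.card {s : Finset (F × F) // s.card = k ∧ IsArc F ↑s}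

/-- `maxArc F P` is the maximum cardinality of an arc contained in `P`. -/
noncomputable def maxArc (F : Type*) [Field F] (P : Finset (F × F)) : ℕ :=
  sSup {k : ℕ | ∃ s : Finset (F × F), s ⊆ P ∧ s.card = k ∧ IsArc F ↑s}

/-- `numCollinearTriples F P` is the number of 3-element collinear subsets of `P`. -/
noncomputable def numCollinearTriples (F : Type*) [Field F] (P : Finset (F × F)) : ℕ :=
  Nat.card {s : Finset (F × F) // s ⊆ P ∧ s.card = 3 ∧ Collinear F (↑s : Set (F × F))}

/-- `P` contains no `l` distinct collinear points. -/
def NoLCollinear (F : Type*) [Field F] (l : ℕ) (P : Finset (F × F)) : Prop :=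
  ∀ s : Finset (F × F), s ⊆ P → s.card = l → ¬ Collinear F (↑s : Set (F × F))

/-- The product Bernoulli(p) measure on subsets of `F²` (encoded as functions
`F × F → Bool`): each point is included independently with probability `p`. -/
noncomputable def randomMeasure (F : Type*) [Field F] [Fintype F] (p : ℝ≥0) (hp : p ≤ 1) :
    Measure ((F × F) → Bool) :=
  Measure.pi fun _ => (PMF.bernoulli p (by exact_mod_cast hp)).toMeasure

/-- The subset of `F²` corresponding to an indicator function `Q : F × F → Bool`. -/
noncomputable def toSubset {F : Type*} [Field F] [Fintype F] (Q : (F × F) → Bool) :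
    Finset (F × F) := Finset.univ.filter fun x => Q x = true

/-- `L` is an affine line in `F²`, i.e. the affine span of two distinct points. -/
def IsAffineLine (F : Type*) [Field F] (L : Set (F × F)) : Prop :=
  ∃ a b : F × F, a ≠ b ∧ L = (affineSpan F {a, b} : Set (F × F))

section RandomSubset

open ProbabilityTheory

variable {α : Type*}

lemma measurableSet_superset (e : Finset α) : MeasurableSet {S : Set α | ↑e ⊆ S} := by
  have eq_iInter : {S : Set α | ↑e ⊆ S} = ⋂ x ∈ e, {S | x ∈ S} := by
    ext; simp [Set.subset_def]
  rw [eq_iInter]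
  exact e.measurableSet_biInter fun x _ ↦ measurableSet_mem x

lemma setBernoulli_real_superset {u : Set α} {e : Finset α} (he : ↑e ⊆ u) (p : unitInterval) :
    setBer(u, p).real {S | ↑e ⊆ S} = (p : ℝ) ^ #e := by
  have preimage_eq : (fun q : α → Prop ↦ {x | q x}) ⁻¹' {S | ↑e ⊆ S} =
      Set.pi e fun _ ↦ {True} := by
    ext q; simp [Set.subset_def]
  rw [measureReal_def, setBernoulli_apply', preimage_eq, Measure.infinitePi_pi _ (by simp),
    prod_congr rfl fun x hx ↦ show _ = (unitInterval.toNNReal p : ℝ≥0∞) by simp [he hx]]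
  simp

lemma integrable_indicator_superset (u : Set α) (p : unitInterval) (e : Finset α) :
    Integrable ({S : Set α | ↑e ⊆ S}.indicator (1 : Set α → ℝ)) setBer(u, p) :=
  (integrable_const 1).indicator (measurableSet_superset e)

variable {ι : Type*} {s : Finset ι} {e : ι → Finset α}

open scoped Classical in
lemma cast_card_filter_subset_eq_sum_indicator (s : Finset ι) (e : ι → Finset α) (S : Set α) :
    (#{i ∈ s | ↑(e i) ⊆ S} : ℝ) = ∑ i ∈ s, {S : Set α | ↑(e i) ⊆ S}.indicator 1 S := by
  simp [Set.indicator_apply]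

open scoped Classical in
lemma integrable_card_filter_subset (u : Set α) (p : unitInterval) (s : Finset ι)
    (e : ι → Finset α) :
    Integrable (fun S : Set α ↦ (#{i ∈ s | ↑(e i) ⊆ S} : ℝ)) setBer(u, p) := by
  simp only [cast_card_filter_subset_eq_sum_indicator]
  exact integrable_finsetSum _ fun i _ ↦ integrable_indicator_superset u p (e i)

open scoped Classical in
lemma integral_card_filter_subset {u : Set α} (he : ∀ i ∈ s, ↑(e i) ⊆ u) (p : unitInterval) :
    ∫ S, (#{i ∈ s | ↑(e i) ⊆ S} : ℝ) ∂setBer(u, p) = ∑ i ∈ s, (p : ℝ) ^ #(e i) := by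
  simp only [cast_card_filter_subset_eq_sum_indicator]
  rw [integral_finsetSum _ fun i _ ↦ integrable_indicator_superset u p (e i)]
  refine sum_congr rfl fun i hi ↦ ?_
  rw [integral_indicator_one (measurableSet_superset _), setBernoulli_real_superset (he i hi)]

end RandomSubset

section Hypergraph

variable {α : Type*} {P : Finset α} {E : Finset (Finset α)}

/-- `A` is an independent set of the hypergraph with edge set `E`: it contains no edge. -/
def IsIndependent (E : Finset (Finset α)) (A : Finset α) : Prop :=
  ∀ e ∈ E, ¬ e ⊆ A

lemma exists_subset_le_card_sub_card_filter_subset [DecidableEq α] (hE : ∀ e ∈ E, e ⊆ P)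
    (p : unitInterval) :
    ∃ S ⊆ P, (p : ℝ) * #P - ∑ e ∈ E, (p : ℝ) ^ #e ≤ (#S : ℝ) - #{e ∈ E | e ⊆ S} := by
  classical
  have hP : ∀ x ∈ P, (({x} : Finset α) : Set α) ⊆ P := by simp
  have hE' : ∀ e ∈ E, ((id e : Finset α) : Set α) ⊆ P := fun e he ↦ coe_subset.2 (hE e he)
  have points_integrable := integrable_card_filter_subset (P : Set α) p P singleton
  have edges_integrable := integrable_card_filter_subset (P : Set α) p E id
  obtain ⟨S, hS⟩ := exists_integral_le (points_integrable.sub edges_integrable)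
  rw [integral_sub' points_integrable edges_integrable, integral_card_filter_subset hP p,
    integral_card_filter_subset hE' p] at hS
  have edge_subset_iff : ∀ e ∈ E, e ⊆ {x ∈ P | x ∈ S} ↔ ↑e ⊆ S := fun e he ↦
    ⟨fun h x hx ↦ (mem_filter.1 (h hx)).2, fun h x hx ↦ mem_filter.2 ⟨hE e he hx, h hx⟩⟩
  refine ⟨{x ∈ P | x ∈ S}, filter_subset _ _, ?_⟩
  rw [filter_congr edge_subset_iff]
  simpa [mul_comm] using hS

lemma exists_isIndependent_card_le_add [DecidableEq α] (hE : ∀ e ∈ E, e.Nonempty)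
    (S : Finset α) :
    ∃ A ⊆ S, IsIndependent E A ∧ #S ≤ #A + #{e ∈ E | e ⊆ S} := by
  choose v hv using hE
  let D := ({e ∈ E | e ⊆ S} : Finset (Finset α)).attach.image fun e ↦ v e.1 (mem_filter.1 e.2).1
  have card_D_le : #D ≤ #{e ∈ E | e ⊆ S} := card_image_le.trans_eq card_attach
  refine ⟨S \ D, sdiff_subset, fun e he heA ↦ ?_, ?_⟩
  · have heS : e ∈ {e ∈ E | e ⊆ S} := mem_filter.2 ⟨he, heA.trans sdiff_subset⟩
    have hvD : v e he ∈ D := mem_image.2 ⟨⟨e, heS⟩, mem_attach _ _, rfl⟩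
    exact (mem_sdiff.1 (heA (hv e he))).2 hvD
  · calc #S ≤ #(S \ D) + #D := Nat.sub_le_iff_le_add.1 (le_card_sdiff D S)
      _ ≤ #(S \ D) + #{e ∈ E | e ⊆ S} := Nat.add_le_add_left card_D_le _

lemma exists_isIndependent_sub_sum_pow_le (hE : ∀ e ∈ E, e ⊆ P) (hne : ∀ e ∈ E, e.Nonempty)
    (p : unitInterval) :
    ∃ A ⊆ P, IsIndependent E A ∧ (p : ℝ) * #P - ∑ e ∈ E, (p : ℝ) ^ #e ≤ #A := by
  classical
  obtain ⟨S, hSP, hS⟩ := exists_subset_le_card_sub_card_filter_subset hE p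
  obtain ⟨A, hAS, hA, hcard⟩ := exists_isIndependent_card_le_add hne S
  have hcard' : (#S : ℝ) ≤ #A + #{e ∈ E | e ⊆ S} := by exact_mod_cast hcard
  exact ⟨A, hAS.trans hSP, hA, by linarith⟩

-- A weak form of Spencer's bound: the hypothesis allows average degree up to `k * K * t ^ (k - 1)`.
lemma exists_isIndependent_of_card_le {k : ℕ} (hk : 2 ≤ k) (hE : E ⊆ P.powersetCard k) {K t : ℝ}
    (hK : 0 ≤ K) (ht : 1 ≤ t) (hcard : (#E : ℝ) ≤ K * #P * t ^ (k - 1)) :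
    ∃ A ⊆ P, IsIndependent E A ∧ (#P : ℝ) / ((1 + K) ^ 2 * t) ≤ (#A : ℝ) := by
  have edge_card : ∀ e ∈ E, #e = k := fun e he ↦ (mem_powersetCard.1 (hE he)).2
  have inv_le : 1 / (1 + K) ≤ 1 := (div_le_one (by positivity)).2 (by linarith)
  let p : unitInterval := ⟨1 / (1 + K) / t, by positivity,
    div_le_one_of_le₀ (inv_le.trans ht) (by positivity)⟩
  obtain ⟨A, hAP, hA, hpA⟩ := exists_isIndependent_sub_sum_pow_le
    (fun e he ↦ (mem_powersetCard.1 (hE he)).1)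
    (fun e he ↦ card_pos.1 (by have := edge_card e he; omega)) p
  refine ⟨A, hAP, hA, le_trans ?_ hpA⟩
  have expected_edges_le : ∑ e ∈ E, (p : ℝ) ^ #e ≤ K * #P / ((1 + K) ^ 2 * t) := by
    obtain ⟨j, rfl⟩ := Nat.exists_eq_add_of_le' hk
    calc ∑ e ∈ E, (p : ℝ) ^ #e = #E * (p : ℝ) ^ (j + 2) := by
          rw [sum_congr rfl fun e he ↦ by rw [edge_card e he], sum_const, nsmul_eq_mul]
      _ ≤ K * #P * t ^ (j + 1) * (p : ℝ) ^ (j + 2) :=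
          mul_le_mul_of_nonneg_right hcard (pow_nonneg p.2.1 _)
      _ = K * #P / t * (1 / (1 + K)) ^ (j + 2) := by
          simp only [p, div_pow _ t]; field_simp; ring
      _ ≤ K * #P / t * (1 / (1 + K)) ^ 2 := by
          gcongr ?_ * ?_
          exact pow_le_pow_of_le_one (by positivity) inv_le (by omega)
      _ = K * #P / ((1 + K) ^ 2 * t) := by field_simp
  calc (#P : ℝ) / ((1 + K) ^ 2 * t) = (p : ℝ) * #P - K * #P / ((1 + K) ^ 2 * t) := by
        simp only [p]; field_simp; ring
    _ ≤ (p : ℝ) * #P - ∑ e ∈ E, (p : ℝ) ^ #e := sub_le_sub_left expected_edges_le _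

end Hypergraph

section Arc

variable {F : Type*} [Field F]

open scoped Classical in
/-- The hypergraph of collinear triples in `P`; its independent subsets of `P` are the arcs. -/
noncomputable def collinearTriples (P : Finset (F × F)) : Finset (Finset (F × F)) :=
  (P.powersetCard 3).filter fun e : Finset (F × F) ↦ Collinear F (e : Set (F × F))

lemma mem_collinearTriples {P e : Finset (F × F)} :
    e ∈ collinearTriples P ↔ e ⊆ P ∧ #e = 3 ∧ Collinear F (e : Set (F × F)) := by
  simp [collinearTriples, and_assoc]

lemma collinearTriples_subset_powersetCard (P : Finset (F × F)) :
    collinearTriples P ⊆ P.powersetCard 3 := by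
  classical exact filter_subset _ _

lemma numCollinearTriples_eq_card (P : Finset (F × F)) :
    numCollinearTriples F P = #(collinearTriples P) :=
  Nat.subtype_card _ fun _ ↦ mem_collinearTriples

lemma IsIndependent.isArc {P A : Finset (F × F)} (hA : IsIndependent (collinearTriples P) A)
    (hAP : A ⊆ P) : IsArc F (A : Set (F × F)) := by
  classical
  intro a ha b hb c hc hab hac hbc hcol
  have habcA : ({a, b, c} : Finset (F × F)) ⊆ A := by
    simp only [insert_subset_iff, singleton_subset_iff]
    exact ⟨ha, hb, hc⟩
  have habc : #({a, b, c} : Finset (F × F)) = 3 := card_eq_three.2 ⟨a, b, c, hab, hac, hbc, rfl⟩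
  exact hA _ (mem_collinearTriples.2 ⟨habcA.trans hAP, habc, by simpa using hcol⟩) habcA

lemma card_le_maxArc {P A : Finset (F × F)} (hAP : A ⊆ P) (hA : IsArc F (A : Set (F × F))) :
    #A ≤ maxArc F P := by
  refine le_csSup ⟨#P, ?_⟩ ⟨A, hAP, rfl, hA⟩
  rintro k ⟨s, hs, rfl, -⟩
  exact card_le_card hs

lemma div_le_maxArc_of_numCollinearTriples_le {P : Finset (F × F)} {K t : ℝ} (hK : 0 ≤ K)
    (ht : 1 ≤ t) (hT : (numCollinearTriples F P : ℝ) ≤ K * #P * t ^ 2) :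
    (#P : ℝ) / ((1 + K) ^ 2 * t) ≤ maxArc F P := by
  rw [numCollinearTriples_eq_card] at hT
  obtain ⟨A, hAP, hA, hcard⟩ :=
    exists_isIndependent_of_card_le (by norm_num) (collinearTriples_subset_powersetCard P) hK ht hT
  exact hcard.trans (by exact_mod_cast card_le_maxArc hAP (hA.isArc hAP))

theorem arc_from_few_triples_polynomial_general {P : Finset (F × F)} (hP : P.Nonempty) {K : ℝ}
    (hK : 0 ≤ K) (hT : (numCollinearTriples F P : ℝ) ≤ K * (#P : ℝ) ^ ((3 : ℝ) / 2)) :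
    1 / (1 + K) ^ 2 * (#P : ℝ) ^ ((3 : ℝ) / 4) ≤ maxArc F P := by
  have one_le_card : (1 : ℝ) ≤ #P := by exact_mod_cast hP.card_pos
  have card_pos : (0 : ℝ) < #P := one_pos.trans_le one_le_card
  have ht : 1 ≤ (#P : ℝ) ^ ((1 : ℝ) / 4) := Real.one_le_rpow one_le_card (by norm_num)
  have mul_sq : (#P : ℝ) * ((#P : ℝ) ^ ((1 : ℝ) / 4)) ^ 2 = (#P : ℝ) ^ ((3 : ℝ) / 2) := by
    rw [← Real.rpow_mul_natCast card_pos.le, ← Real.rpow_one_add' card_pos.le (by norm_num)]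
    norm_num
  have div_eq : (#P : ℝ) / (#P : ℝ) ^ ((1 : ℝ) / 4) = (#P : ℝ) ^ ((3 : ℝ) / 4) := by
    rw [← Real.rpow_one_sub' card_pos.le (by norm_num)]
    norm_num
  rw [← mul_sq, ← mul_assoc] at hT
  calc 1 / (1 + K) ^ 2 * (#P : ℝ) ^ ((3 : ℝ) / 4)
      = (#P : ℝ) / ((1 + K) ^ 2 * (#P : ℝ) ^ ((1 : ℝ) / 4)) := by
        rw [← div_eq, div_mul_div_comm, one_mul]
    _ ≤ (maxArc F P : ℝ) := div_le_maxArc_of_numCollinearTriples_le hK ht hT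

end Arc

theorem arc_from_few_triples_polynomial :
    ∀ K : ℝ, 0 < K → ∃ c : ℝ, 0 < c ∧
      ∀ (F : Type) [Field F], ∀ P : Finset (F × F), P.Nonempty →
      (numCollinearTriples F P : ℝ) ≤ K * (P.card : ℝ) ^ ((3 : ℝ) / 2) →
      c * (P.card : ℝ) ^ ((3 : ℝ) / 4) ≤ (maxArc F P : ℝ) := by
  intro K hK
  exact ⟨1 / (1 + K) ^ 2, by positivity, fun _ _ _ hP ↦
    arc_from_few_triples_polynomial_general hP hK.le⟩
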